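/- For the full shift T on X = ∏_{n∈ℤ} M over a perfect Polish metric space M, for every L > 0 the set {μ ∈ M_e : d̄_μ(x) ≥ L for μ-a.e. x ∈ X} (equivalently, {μ ∈ M_e : dim_P^-(μ) ≥ L}) is dense in M_e (with the topology induced from the weak topology on M(T)). -/

import Mathlib

open Filter MeasureTheory Topology Metric Set
open scoped ENNReal NNReal

noncomputable section
attribute [local instance] Classical.propDecidable

/-- The full (bilateral) shift on the product space `ℤ → M`: `(T x) i = x (i - 1)`. -/
def fullShift {M : Type*} (x : ℤ → M) : ℤ → M := fun i => x (i - 1)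

/-- The metric `d(x,y) = ∑_{n ∈ ℤ} 2^{-|n|} ρ(xₙ,yₙ)/(1 + ρ(xₙ,yₙ))` on `ℤ → M`,
compatible with the product topology. -/
def shiftDist {M : Type*} [MetricSpace M] (x y : ℤ → M) : ℝ :=
  ∑' n : ℤ, (1 / 2 : ℝ) ^ n.natAbs * (dist (x n) (y n) / (1 + dist (x n) (y n)))

/-- Lower local dimension `d̲_μ(x) = liminf_{ε → 0⁺} log μ(B(x,ε)) / log ε` of `μ` at `x`,
with respect to the distance function `d`; by convention it is `∞` if some ball
centered at `x` has measure zero. -/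
def lowerLocalDim {X : Type*} [MeasurableSpace X] (d : X → X → ℝ)
    (μ : Measure X) (x : X) : ℝ≥0∞ :=
  if ∃ ε > 0, μ {y | d x y < ε} = 0 then ⊤
  else liminf (fun ε : ℝ =>
    ENNReal.ofReal (Real.log (μ {y | d x y < ε}).toReal / Real.log ε)) (𝓝[>] (0 : ℝ))

/-- Upper local dimension `d̄_μ(x) = limsup_{ε → 0⁺} log μ(B(x,ε)) / log ε`. -/
def upperLocalDim {X : Type*} [MeasurableSpace X] (d : X → X → ℝ)
    (μ : Measure X) (x : X) : ℝ≥0∞ :=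
  if ∃ ε > 0, μ {y | d x y < ε} = 0 then ⊤
  else limsup (fun ε : ℝ =>
    ENNReal.ofReal (Real.log (μ {y | d x y < ε}).toReal / Real.log ε)) (𝓝[>] (0 : ℝ))

/-- The ratio `log τ_r(x) / (- log r)`, where `τ_r(x) = inf {n ≥ 1 | Tⁿ x ∈ B̄(x,r)}` is the
first return time of `x` to the closed ball `B̄(x,r)`; by convention it is `∞` when the
return time is infinite. -/
def recRatio {X : Type*} (d : X → X → ℝ) (T : X → X) (x : X) (r : ℝ) : ℝ≥0∞ :=
  if ∃ n : ℕ, 1 ≤ n ∧ d (T^[n] x) x ≤ r then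
    ENNReal.ofReal
      (Real.log ((sInf {n : ℕ | 1 ≤ n ∧ d (T^[n] x) x ≤ r} : ℕ) : ℝ) / (- Real.log r))
  else ⊤

/-- Lower recurrence rate `R̲(x) = liminf_{r → 0⁺} log τ_r(x) / (- log r)`. -/
def lowerRecRate {X : Type*} (d : X → X → ℝ) (T : X → X) (x : X) : ℝ≥0∞ :=
  liminf (recRatio d T x) (𝓝[>] (0 : ℝ))

/-- Upper recurrence rate `R̄(x) = limsup_{r → 0⁺} log τ_r(x) / (- log r)`. -/
def upperRecRate {X : Type*} (d : X → X → ℝ) (T : X → X) (x : X) : ℝ≥0∞ :=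
  limsup (recRatio d T x) (𝓝[>] (0 : ℝ))

/-- The ratio `log τ_r(x,y) / (- log r)`, where `τ_r(x,y) = inf {n ≥ 1 | Tⁿ x ∈ B̄(y,r)}` is the
first entrance time of the orbit of `x` into the closed ball `B̄(y,r)`; by convention `∞`
when the entrance time is infinite. -/
def waitRatio {X : Type*} (d : X → X → ℝ) (T : X → X) (x y : X) (r : ℝ) : ℝ≥0∞ :=
  if ∃ n : ℕ, 1 ≤ n ∧ d (T^[n] x) y ≤ r then
    ENNReal.ofReal
      (Real.log ((sInf {n : ℕ | 1 ≤ n ∧ d (T^[n] x) y ≤ r} : ℕ) : ℝ) / (- Real.log r))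
  else ⊤

/-- Lower quantitative waiting time indicator `R̲(x,y)`. -/
def lowerWaitRate {X : Type*} (d : X → X → ℝ) (T : X → X) (x y : X) : ℝ≥0∞ :=
  liminf (waitRatio d T x y) (𝓝[>] (0 : ℝ))

/-- Upper quantitative waiting time indicator `R̄(x,y)`. -/
def upperWaitRate {X : Type*} (d : X → X → ℝ) (T : X → X) (x y : X) : ℝ≥0∞ :=
  limsup (waitRatio d T x y) (𝓝[>] (0 : ℝ))

/-- The entropy `H(P) = ∑_c -μ(P_c) log μ(P_c)` of the finite measurable partition
`P_c = f ⁻¹ {c}` of `X` induced by a map `f` into a finite set. -/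
def partitionEntropy {X F : Type*} [MeasurableSpace X] [Fintype F]
    (μ : Measure X) (f : X → F) : ℝ :=
  ∑ c : F, Real.negMulLog ((μ (f ⁻¹' {c})).toReal)

/-- The Kolmogorov–Sinai (measure-theoretic) entropy `h_μ(T)`: the supremum, over all finite
measurable partitions (coded by measurable maps `f : X → Fin k`), of the limit of
`H(⋁_{i<n} T⁻ⁱ P) / n`. -/
def kolmogorovSinaiEntropy {X : Type*} [MeasurableSpace X] (T : X → X) (μ : Measure X) :
    ℝ≥0∞ :=
  ⨆ (k : ℕ) (f : X → Fin k) (_ : Measurable f),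
    ENNReal.ofReal
      (liminf (fun n : ℕ =>
        partitionEntropy μ (fun x (i : Fin n) => f (T^[(i : ℕ)] x)) / n) atTop)

end

/-!
Label the coordinates of an ergodic `μ` by independent uniform elements of a set of `K ≥ 2 ^ L`
labels. The product system is ergodic: after a large translation the label part of a set depending
on finitely many labels is independent of itself on every fibre, so an invariant set `A` of measure
`a` satisfies `a = a ^ 2`. Since `M` is perfect, each point of a finite net of `M` can be replaced
by `K` distinct points close to it; moving every coordinate to the point selected by its label gives
a factor, hence an ergodic measure, close to `μ`. A `shiftDist`-ball of radius comparable to `2⁻ⁿ`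
constrains the `2n + 1` central coordinates to balls too small to contain points with two different
labels, so its mass is at most `K ^ -(2n + 1)` and every local dimension is at least `L`.
-/

open ProbabilityTheory

section ErgodicProduct

open scoped symmDiff

variable {X Y : Type*} [MeasurableSpace X] [MeasurableSpace Y] {T : X → X} {S : Y → Y}
  {μ : Measure X} {Q : Measure Y} {A B : Set (X × Y)}

lemma abs_measureReal_sub_inter_preimage_le [IsFiniteMeasure μ] {A B : Set X}
    (hT : MeasurePreserving T μ μ) (hA : MeasurableSet A) (hB : MeasurableSet B)
    (hTA : T ⁻¹' A = A) :
    |μ.real A - μ.real (B ∩ T ⁻¹' B)| ≤ 2 * μ.real (A ∆ B) := by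
  have hsubset : A ∆ (B ∩ T ⁻¹' B) ⊆ A ∆ B ∪ T ⁻¹' (A ∆ B) := by
    intro x
    have hx : T x ∈ A ↔ x ∈ A := by rw [← mem_preimage, hTA]
    simp only [mem_symmDiff, mem_inter_iff, mem_union, mem_preimage]
    tauto
  calc |μ.real A - μ.real (B ∩ T ⁻¹' B)|
      ≤ μ.real (A ∆ (B ∩ T ⁻¹' B)) :=
        abs_measureReal_sub_le_measureReal_symmDiff hA.nullMeasurableSet
          (hB.inter (hT.measurable hB)).nullMeasurableSet
    _ ≤ μ.real (A ∆ B ∪ T ⁻¹' (A ∆ B)) := measureReal_mono hsubset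
    _ ≤ μ.real (A ∆ B) + μ.real (T ⁻¹' (A ∆ B)) := measureReal_union_le _ _
    _ = 2 * μ.real (A ∆ B) := by
        rw [hT.measureReal_preimage (hA.symmDiff hB).nullMeasurableSet]; ring

lemma abs_integral_mul_comp_sub_sq_le [IsProbabilityMeasure μ] (hT : MeasurePreserving T μ μ)
    {f : X → ℝ} (hf : Measurable f) (hf01 : ∀ x, f x ∈ Icc 0 1) {a : ℝ} (ha : a ∈ Icc 0 1) :
    |∫ x, f x * f (T x) ∂μ - a ^ 2| ≤ 2 * ∫ x, |f x - a| ∂μ := by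
  have hfT : Measurable fun x => f (T x) := hf.comp hT.measurable
  have hint : Integrable (fun x => |f x - a|) μ :=
    (Integrable.of_mem_Icc 0 1 hf.aemeasurable (.of_forall hf01)).sub (integrable_const a) |>.abs
  have hintT : Integrable (fun x => |f (T x) - a|) μ := hT.integrable_comp_of_integrable hint
  have hprod : Integrable (fun x => f x * f (T x)) μ :=
    Integrable.of_mem_Icc 0 1 (hf.mul hfT).aemeasurable
      (.of_forall fun x => unitInterval.mul_mem (hf01 x) (hf01 (T x)))
  have hpointwise (x : X) : |f x * f (T x) - a ^ 2| ≤ |f x - a| + |f (T x) - a| :=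
    calc |f x * f (T x) - a ^ 2| = |(f x - a) * f (T x) + a * (f (T x) - a)| := by ring_nf
      _ ≤ |f x - a| * f (T x) + a * |f (T x) - a| := by
          simpa only [abs_mul, abs_of_nonneg (hf01 (T x)).1, abs_of_nonneg ha.1] using
            abs_add_le ((f x - a) * f (T x)) (a * (f (T x) - a))
      _ ≤ |f x - a| + |f (T x) - a| :=
          add_le_add (mul_le_of_le_one_right (abs_nonneg _) (hf01 (T x)).2)
            (mul_le_of_le_one_left (abs_nonneg _) ha.2)
  calc |∫ x, f x * f (T x) ∂μ - a ^ 2|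
      = |∫ x, (f x * f (T x) - a ^ 2) ∂μ| := by
        rw [integral_sub hprod (integrable_const _)]; simp
    _ ≤ ∫ x, |f x * f (T x) - a ^ 2| ∂μ := abs_integral_le_integral_abs
    _ ≤ ∫ x, (|f x - a| + |f (T x) - a|) ∂μ :=
        integral_mono (hprod.sub (integrable_const _)).abs (hint.add hintT) hpointwise
    _ = 2 * ∫ x, |f x - a| ∂μ := by
        rw [integral_add hint hintT,
          ← integral_map (f := fun x => |f x - a|) hT.aemeasurable
            (by rw [hT.map_eq]; exact hint.aestronglyMeasurable), hT.map_eq]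
        ring

lemma measurable_measureReal_prodMk_left [SFinite Q] (hA : MeasurableSet A) :
    Measurable fun x => Q.real (Prod.mk x ⁻¹' A) :=
  (measurable_measure_prodMk_left hA).ennreal_toReal

lemma integral_measureReal_prodMk_left [IsFiniteMeasure Q] (hA : MeasurableSet A) :
    ∫ x, Q.real (Prod.mk x ⁻¹' A) ∂μ = (μ.prod Q).real A := by
  simp only [Measure.real]
  rw [integral_toReal (measurable_measure_prodMk_left hA).aemeasurable
    (.of_forall fun _ => measure_lt_top _ _), Measure.prod_apply hA]

lemma integrable_measureReal_prodMk_left [IsFiniteMeasure μ] [IsFiniteMeasure Q]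
    (hA : MeasurableSet A) : Integrable (fun x => Q.real (Prod.mk x ⁻¹' A)) μ :=
  Integrable.of_mem_Icc 0 (Q.real univ) (measurable_measureReal_prodMk_left hA).aemeasurable
    (.of_forall fun _ => ⟨measureReal_nonneg, measureReal_mono (subset_univ _)⟩)

lemma integral_abs_measureReal_prodMk_left_sub_le [IsFiniteMeasure μ] [IsFiniteMeasure Q]
    (hA : MeasurableSet A) (hB : MeasurableSet B) :
    ∫ x, |Q.real (Prod.mk x ⁻¹' A) - Q.real (Prod.mk x ⁻¹' B)| ∂μ ≤ (μ.prod Q).real (A ∆ B) := by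
  rw [← integral_measureReal_prodMk_left (hA.symmDiff hB)]
  refine integral_mono ((integrable_measureReal_prodMk_left hA).sub
    (integrable_measureReal_prodMk_left hB)).abs
    (integrable_measureReal_prodMk_left (hA.symmDiff hB)) fun x => ?_
  exact abs_measureReal_sub_le_measureReal_symmDiff
    (measurable_prodMk_left hA).nullMeasurableSet (measurable_prodMk_left hB).nullMeasurableSet

lemma ae_measureReal_prodMk_left_eq [IsProbabilityMeasure μ] [IsFiniteMeasure Q]
    (hT : Ergodic T μ) (hS : MeasurePreserving S Q Q) (hA : MeasurableSet A)
    (hinv : Prod.map T S ⁻¹' A = A) :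
    ∀ᵐ x ∂μ, Q.real (Prod.mk x ⁻¹' A) = (μ.prod Q).real A := by
  have hcomp : (fun x => Q.real (Prod.mk x ⁻¹' A)) ∘ T = fun x => Q.real (Prod.mk x ⁻¹' A) := by
    funext x
    calc Q.real (Prod.mk (T x) ⁻¹' A) = Q.real (S ⁻¹' (Prod.mk (T x) ⁻¹' A)) :=
          (hS.measureReal_preimage (measurable_prodMk_left hA).nullMeasurableSet).symm
      _ = Q.real (Prod.mk x ⁻¹' (Prod.map T S ⁻¹' A)) := rfl
      _ = Q.real (Prod.mk x ⁻¹' A) := by rw [hinv]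
  obtain ⟨c, hc⟩ :=
    hT.toPreErgodic.ae_eq_const_of_ae_eq_comp (measurable_measureReal_prodMk_left hA) hcomp
  have hcA : (μ.prod Q).real A = c := by
    rw [← integral_measureReal_prodMk_left hA, integral_congr_ae hc]; simp
  filter_upwards [hc] with x hx
  rw [hx, hcA, Function.const_apply]

-- The fibre measure of an invariant set `A` is a.e. equal to `a := (μ × Q)(A)`. Approximating `A`
-- by `B ∈ 𝒜`, decorrelation turns `a ≈ (μ × Q)(B ∩ (T × S)⁻ⁿ B)` into `a ≈ a²`.
lemma measureReal_eq_sq_of_forall_decorrelated [IsProbabilityMeasure μ] [IsProbabilityMeasure Q]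
    (hT : Ergodic T μ) (hS : MeasurePreserving S Q Q) {𝒜 : Set (Set (X × Y))}
    (h𝒜 : (μ.prod Q).MeasureDense 𝒜)
    (hdecor : ∀ B ∈ 𝒜, ∃ n : ℕ, ∀ x, Q.real (Prod.mk x ⁻¹' (B ∩ (Prod.map T S)^[n] ⁻¹' B)) =
      Q.real (Prod.mk x ⁻¹' B) * Q.real (Prod.mk (T^[n] x) ⁻¹' B))
    (hA : MeasurableSet A) (hinv : Prod.map T S ⁻¹' A = A) :
    (μ.prod Q).real A = (μ.prod Q).real A ^ 2 := by
  set a := (μ.prod Q).real A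
  refine eq_of_forall_dist_le fun ε hε => ?_
  obtain ⟨B, hB𝒜, hAB⟩ := h𝒜.approx A hA (measure_ne_top _ _) (ε / 4) (by positivity)
  have hB := h𝒜.measurable B hB𝒜
  have hABε : (μ.prod Q).real (A ∆ B) ≤ ε / 4 :=
    ENNReal.toReal_le_of_le_ofReal (by positivity) hAB.le
  obtain ⟨n, hn⟩ := hdecor B hB𝒜
  have hRn := (hT.toMeasurePreserving.prod hS).iterate n
  have hclose : |a - (μ.prod Q).real (B ∩ (Prod.map T S)^[n] ⁻¹' B)| ≤
      2 * (μ.prod Q).real (A ∆ B) :=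
    abs_measureReal_sub_inter_preimage_le hRn hA hB (Function.IsFixedPt.preimage_iterate hinv n)
  have hinter : (μ.prod Q).real (B ∩ (Prod.map T S)^[n] ⁻¹' B) =
      ∫ x, Q.real (Prod.mk x ⁻¹' B) * Q.real (Prod.mk (T^[n] x) ⁻¹' B) ∂μ := by
    rw [← integral_measureReal_prodMk_left (hB.inter (hRn.measurable hB))]
    exact integral_congr_ae (.of_forall hn)
  have hfibre : ∫ x, |Q.real (Prod.mk x ⁻¹' B) - a| ∂μ ≤ (μ.prod Q).real (A ∆ B) := by
    refine (integral_congr_ae ?_).trans_le (integral_abs_measureReal_prodMk_left_sub_le hA hB)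
    filter_upwards [ae_measureReal_prodMk_left_eq hT hS hA hinv] with x hx
    rw [hx, abs_sub_comm]
  have hsq : |(μ.prod Q).real (B ∩ (Prod.map T S)^[n] ⁻¹' B) - a ^ 2| ≤
      2 * ∫ x, |Q.real (Prod.mk x ⁻¹' B) - a| ∂μ := by
    rw [hinter]
    exact abs_integral_mul_comp_sub_sq_le (hT.toMeasurePreserving.iterate n)
      (measurable_measureReal_prodMk_left hB) (fun _ => ⟨measureReal_nonneg, measureReal_le_one⟩)
      ⟨measureReal_nonneg, measureReal_le_one⟩
  rw [Real.dist_eq]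
  linarith [abs_sub_le a ((μ.prod Q).real (B ∩ (Prod.map T S)^[n] ⁻¹' B)) (a ^ 2)]

theorem ergodic_prodMap_of_forall_decorrelated [IsProbabilityMeasure μ] [IsProbabilityMeasure Q]
    (hT : Ergodic T μ) (hS : MeasurePreserving S Q Q) {𝒜 : Set (Set (X × Y))}
    (h𝒜 : (μ.prod Q).MeasureDense 𝒜)
    (hdecor : ∀ B ∈ 𝒜, ∃ n : ℕ, ∀ x, Q.real (Prod.mk x ⁻¹' (B ∩ (Prod.map T S)^[n] ⁻¹' B)) =
      Q.real (Prod.mk x ⁻¹' B) * Q.real (Prod.mk (T^[n] x) ⁻¹' B)) :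
    Ergodic (Prod.map T S) (μ.prod Q) := by
  refine ⟨hT.toMeasurePreserving.prod hS, ⟨fun A hA hinv => ?_⟩⟩
  have hidem : IsIdempotentElem ((μ.prod Q).real A) := by
    rw [IsIdempotentElem, ← sq]
    exact (measureReal_eq_sq_of_forall_decorrelated hT hS h𝒜 hdecor hA hinv).symm
  rw [eventuallyConst_set']
  refine (IsIdempotentElem.iff_eq_zero_or_one.1 hidem).imp (fun h0 => ?_) fun h1 => ?_
  · rwa [ae_eq_empty, ← measureReal_eq_zero_iff]
  · rw [ae_eq_univ, ← measureReal_eq_zero_iff, probReal_compl_eq_one_sub hA, h1, sub_self]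

end ErgodicProduct

section FibreCylinders

/-- The subsets of `X × (ι → E)` that are measurable with respect to the first factor and finitely
many coordinates of the second; an algebra of sets generating the product σ-algebra. -/
def fibreCylinders (X ι E : Type*) [MeasurableSpace X] [MeasurableSpace E] :
    Set (Set (X × (ι → E))) :=
  {B | ∃ (S : Finset ι) (C : Set (X × (S → E))), MeasurableSet C ∧ Prod.map id S.restrict ⁻¹' C = B}

variable {X ι E : Type*} [MeasurableSpace X] [MeasurableSpace E]

lemma measurableSet_of_mem_fibreCylinders {B : Set (X × (ι → E))} (hB : B ∈ fibreCylinders X ι E) :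
    MeasurableSet B := by
  obtain ⟨S, C, hC, rfl⟩ := hB
  exact measurable_id.prodMap (Finset.measurable_restrict S) hC

lemma exists_preimage_restrict_eq_of_subset {S S' : Finset ι} (h : S ⊆ S') {C : Set (X × (S → E))}
    (hC : MeasurableSet C) :
    ∃ C' : Set (X × (S' → E)), MeasurableSet C' ∧
      Prod.map id (S'.restrict (π := fun _ => E)) ⁻¹' C' = Prod.map id S.restrict ⁻¹' C :=
  ⟨Prod.map id (Finset.restrict₂ (π := fun _ => E) h) ⁻¹' C,
    measurable_id.prodMap (Finset.measurable_restrict₂ h) hC, rfl⟩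

lemma isSetAlgebra_fibreCylinders : IsSetAlgebra (fibreCylinders X ι E) where
  empty_mem := ⟨∅, ∅, .empty, rfl⟩
  compl_mem := by
    rintro _ ⟨S, C, hC, rfl⟩
    exact ⟨S, Cᶜ, hC.compl, rfl⟩
  union_mem := by
    classical
    rintro _ _ ⟨S₁, C₁, hC₁, rfl⟩ ⟨S₂, C₂, hC₂, rfl⟩
    obtain ⟨D₁, hD₁, h₁⟩ :=
      exists_preimage_restrict_eq_of_subset (Finset.subset_union_left (s₂ := S₂)) hC₁
    obtain ⟨D₂, hD₂, h₂⟩ :=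
      exists_preimage_restrict_eq_of_subset (Finset.subset_union_right (s₁ := S₁)) hC₂
    exact ⟨S₁ ∪ S₂, D₁ ∪ D₂, hD₁.union hD₂, by rw [preimage_union, h₁, h₂]⟩

lemma generateFrom_fibreCylinders :
    MeasurableSpace.generateFrom (fibreCylinders X ι E) = Prod.instMeasurableSpace := by
  refine le_antisymm
    (MeasurableSpace.generateFrom_le fun _ => measurableSet_of_mem_fibreCylinders) ?_
  have hfst : Measurable[.generateFrom (fibreCylinders X ι E)] (Prod.fst : X × (ι → E) → X) :=
    fun s hs => MeasurableSpace.measurableSet_generateFrom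
      ⟨∅, Prod.fst ⁻¹' s, measurable_fst hs, rfl⟩
  have hsnd : Measurable[.generateFrom (fibreCylinders X ι E)]
      (Prod.snd : X × (ι → E) → ι → E) := by
    refine @measurable_pi_lambda _ _ _ (.generateFrom (fibreCylinders X ι E)) _ _ fun i s hs => ?_
    let eval_i : X × (({i} : Finset ι) → E) → E := fun z => z.2 ⟨i, Finset.mem_singleton_self i⟩
    have heval : Measurable eval_i := by fun_prop
    exact MeasurableSpace.measurableSet_generateFrom ⟨{i}, eval_i ⁻¹' s, heval hs, rfl⟩
  exact sup_le hfst.comap_le hsnd.comap_le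

end FibreCylinders

section Bernoulli

variable {E : Type*}

lemma fullShift_iterate_apply (n : ℕ) (x : ℤ → E) (i : ℤ) : fullShift^[n] x i = x (i - n) := by
  induction n generalizing x with
  | zero => simp
  | succ n ih =>
    rw [Function.iterate_succ_apply, ih, fullShift, Nat.cast_succ, sub_sub]

variable [MeasurableSpace E]

lemma measurable_fullShift : Measurable (fullShift (M := E)) :=
  measurable_pi_lambda _ fun i => measurable_pi_apply (i - 1)

variable (p : Measure E) [IsProbabilityMeasure p]

lemma measurePreserving_fullShift_infinitePi :
    MeasurePreserving (fullShift (M := E)) (Measure.infinitePi fun _ => p)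
      (Measure.infinitePi fun _ => p) :=
  ⟨measurable_fullShift, Measure.map_infinitePi_infinitePi_of_inj (P := fun _ : ℤ => p)
    (f := fun i => i - 1) sub_left_injective⟩

lemma exists_nat_forall_ne_sub (S : Finset ℤ) : ∃ n : ℕ, ∀ i ∈ S, ∀ j ∈ S, i ≠ j - n := by
  obtain ⟨n, hn⟩ := Infinite.exists_notMem_finset ((S ×ˢ S).image fun q => (q.2 - q.1).toNat)
  refine ⟨n, fun i hi j hj hij => hn ?_⟩
  exact Finset.mem_image.2 ⟨(i, j), Finset.mk_mem_product hi hj, by grind⟩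

lemma indepFun_restrict_fullShift_iterate {S : Finset ℤ} {n : ℕ}
    (hn : ∀ i ∈ S, ∀ j ∈ S, i ≠ j - n) :
    IndepFun (S.restrict (π := fun _ => E)) (S.restrict ∘ fullShift^[n])
      (Measure.infinitePi fun _ => p) := by
  classical
  let S' := S.image fun i => i - (n : ℤ)
  have hdisj : Disjoint S S' := by
    simp only [S', Finset.disjoint_left, Finset.mem_image, not_exists, not_and]
    exact fun i hi j hj hij => hn i hi j hj hij.symm
  have hindep := (iIndepFun_infinitePi (P := fun _ : ℤ => p) (X := fun _ => id)
    fun _ => measurable_id).indepFun_finset S S' hdisj measurable_pi_apply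
  let translate (η : S' → E) (i : S) : E := η ⟨i - n, Finset.mem_image_of_mem _ i.2⟩
  have htranslate : S.restrict (π := fun _ => E) ∘ fullShift^[n] = translate ∘ S'.restrict := by
    funext ξ i
    exact fullShift_iterate_apply n ξ i
  rw [htranslate]
  exact hindep.comp measurable_id (by fun_prop : Measurable translate)

lemma exists_decorrelated_of_mem_fibreCylinders {X : Type*} [MeasurableSpace X] (T : X → X)
    {B : Set (X × (ℤ → E))} (hB : B ∈ fibreCylinders X ℤ E) :
    ∃ n : ℕ, ∀ x, (Measure.infinitePi fun _ => p).real
        (Prod.mk x ⁻¹' (B ∩ (Prod.map T fullShift)^[n] ⁻¹' B)) =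
      (Measure.infinitePi fun _ => p).real (Prod.mk x ⁻¹' B) *
        (Measure.infinitePi fun _ => p).real (Prod.mk (T^[n] x) ⁻¹' B) := by
  have hBm := measurableSet_of_mem_fibreCylinders hB
  obtain ⟨S, C, hC, rfl⟩ := hB
  obtain ⟨n, hn⟩ := exists_nat_forall_ne_sub S
  refine ⟨n, fun x => ?_⟩
  have hindep := (indepFun_restrict_fullShift_iterate p hn).measure_inter_preimage_eq_mul
    _ _ (measurable_prodMk_left (x := x) hC) (measurable_prodMk_left (x := T^[n] x) hC)
  rw [← ((measurePreserving_fullShift_infinitePi p).iterate n).measureReal_preimage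
    (s := Prod.mk (T^[n] x) ⁻¹' _) (measurable_prodMk_left hBm).nullMeasurableSet, Prod.map_iterate]
  simp only [Measure.real]
  rw [← ENNReal.toReal_mul]
  exact congrArg ENNReal.toReal hindep

theorem ergodic_prodMap_fullShift_infinitePi {X : Type*} [MeasurableSpace X] {T : X → X}
    {μ : Measure X} [IsProbabilityMeasure μ] (hT : Ergodic T μ) :
    Ergodic (Prod.map T fullShift) (μ.prod (Measure.infinitePi fun _ => p)) :=
  ergodic_prodMap_of_forall_decorrelated hT (measurePreserving_fullShift_infinitePi p)
    (.of_generateFrom_isSetAlgebra_finite _ isSetAlgebra_fibreCylinders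
      generateFrom_fibreCylinders.symm)
    fun _ => exists_decorrelated_of_mem_fibreCylinders p T

end Bernoulli

section LocalDim

variable {X : Type*} [MeasurableSpace X] {d : X → X → ℝ} {ν : Measure X} {x : X}

theorem le_lowerLocalDim_of_eventually_measure_le {L : ℝ≥0}
    (h : ∀ᶠ ε in 𝓝[>] (0 : ℝ), ν {y | d x y < ε} ≤ ENNReal.ofReal ε ^ (L : ℝ)) :
    L ≤ lowerLocalDim d ν x := by
  unfold lowerLocalDim
  split_ifs with hnull
  · exact le_top
  push Not at hnull
  refine le_liminf_of_le (by isBoundedDefault) ?_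
  filter_upwards [h, Ioo_mem_nhdsGT one_pos] with ε hε ⟨hε0, hε1⟩
  have hfinite : ENNReal.ofReal ε ^ (L : ℝ) ≠ ⊤ := by finiteness
  have hpos : 0 < (ν {y | d x y < ε}).toReal :=
    ENNReal.toReal_pos (hnull ε hε0) (ne_top_of_le_ne_top hfinite hε)
  have hle : (ν {y | d x y < ε}).toReal ≤ ε ^ (L : ℝ) := by
    simpa only [← ENNReal.toReal_rpow, ENNReal.toReal_ofReal hε0.le] using
      ENNReal.toReal_mono hfinite hε
  rw [← ENNReal.ofReal_coe_nnreal]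
  refine ENNReal.ofReal_le_ofReal ((le_div_iff_of_neg (Real.log_neg hε0 hε1)).2 ?_)
  rw [← Real.log_rpow hε0]
  exact Real.log_le_log hpos hle

lemma lowerLocalDim_le_upperLocalDim : lowerLocalDim d ν x ≤ upperLocalDim d ν x := by
  unfold lowerLocalDim upperLocalDim
  split_ifs
  · exact le_rfl
  · exact liminf_le_limsup

end LocalDim

section ShiftDist

variable {M : Type*} [MetricSpace M]

lemma summable_half_pow_natAbs : Summable fun n : ℤ => (1 / 2 : ℝ) ^ n.natAbs :=
  .of_nat_of_neg (by simpa using summable_geometric_two) (by simpa using summable_geometric_two)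

lemma half_pow_natAbs_mul_le_shiftDist (x y : ℤ → M) (i : ℤ) :
    (1 / 2 : ℝ) ^ i.natAbs * (dist (x i) (y i) / (1 + dist (x i) (y i))) ≤ shiftDist x y := by
  have hnonneg (n : ℤ) :
      0 ≤ (1 / 2 : ℝ) ^ n.natAbs * (dist (x n) (y n) / (1 + dist (x n) (y n))) := by positivity
  have hsummable := Summable.of_nonneg_of_le hnonneg
    (fun n => mul_le_of_le_one_right (by positivity)
      (div_le_one_of_le₀ (le_add_of_nonneg_left zero_le_one) (by positivity)))
    summable_half_pow_natAbs
  exact hsummable.le_tsum i fun j _ => hnonneg j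

lemma setOf_shiftDist_lt_subset_pi_ball (x : ℤ → M) {δ : ℝ} (hδ : 0 < δ) (n : ℕ) :
    {y | shiftDist x y < (1 / 2) ^ n * (δ / (1 + δ))} ⊆
      (Finset.Icc (-n : ℤ) n : Set ℤ).pi fun i => ball (x i) δ := by
  intro y hy i hi
  have hin : i.natAbs ≤ n := by
    rw [Finset.mem_coe, Finset.mem_Icc] at hi
    lia
  have hlt : (1 / 2 : ℝ) ^ i.natAbs * (dist (x i) (y i) / (1 + dist (x i) (y i))) <
      (1 / 2) ^ i.natAbs * (δ / (1 + δ)) :=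
    calc _ ≤ shiftDist x y := half_pow_natAbs_mul_le_shiftDist x y i
      _ < (1 / 2) ^ n * (δ / (1 + δ)) := hy
      _ ≤ (1 / 2) ^ i.natAbs * (δ / (1 + δ)) := mul_le_mul_of_nonneg_right
          (pow_le_pow_of_le_one (by norm_num) (by norm_num) hin) (by positivity)
  have hdiv := lt_of_mul_lt_mul_left hlt (by positivity)
  rw [div_lt_div_iff₀ (by positivity) (by positivity)] at hdiv
  rw [mem_ball']
  linarith

lemma exists_half_pow_near {t ε : ℝ} (ht0 : 0 < t) (ht1 : t ≤ 1) (hε0 : 0 < ε)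
    (hε : ε ≤ t ^ 2 / 2) :
    ∃ n : ℕ, ε ≤ (1 / 2) ^ n * t ∧ (1 / 2) ^ (2 * n + 1) ≤ ε := by
  have hεt : ε / t ≤ t / 2 := by rw [div_le_iff₀ ht0]; linarith
  obtain ⟨n, hlt, hle⟩ := exists_nat_pow_near_of_lt_one (div_pos hε0 ht0) (by linarith)
    (by norm_num : (0 : ℝ) < 1 / 2) (by norm_num)
  have hnt : (1 / 2 : ℝ) ^ n ≤ t := by
    rw [pow_succ] at hlt
    linarith
  refine ⟨n, (div_le_iff₀ ht0).1 hle, ?_⟩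
  calc (1 / 2 : ℝ) ^ (2 * n + 1) = (1 / 2) ^ (n + 1) * (1 / 2) ^ n := by ring
    _ ≤ ε / t * t := by gcongr
    _ = ε := div_mul_cancel₀ ε ht0.ne'

theorem le_lowerLocalDim_shiftDist [MeasurableSpace M] {ν : Measure (ℤ → M)} {x : ℤ → M}
    {L : ℝ≥0} {δ : ℝ} (hδ : 0 < δ) {c : ℝ≥0∞} (hc : c ≤ 2⁻¹ ^ (L : ℝ))
    (hν : ∀ n : ℕ, ν ((Finset.Icc (-n : ℤ) n : Set ℤ).pi fun i => ball (x i) δ) ≤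
      c ^ (2 * n + 1)) :
    L ≤ lowerLocalDim shiftDist ν x := by
  set t := δ / (1 + δ)
  have ht0 : 0 < t := by positivity
  have ht1 : t ≤ 1 := div_le_one_of_le₀ (le_add_of_nonneg_left zero_le_one) (by positivity)
  refine le_lowerLocalDim_of_eventually_measure_le ?_
  filter_upwards [Ioc_mem_nhdsGT (by positivity : 0 < t ^ 2 / 2)] with ε ⟨hε0, hε⟩
  obtain ⟨n, hεn, hnε⟩ := exists_half_pow_near ht0 ht1 hε0 hε
  have hnε' : (2⁻¹ : ℝ≥0∞) ^ (2 * n + 1) ≤ ENNReal.ofReal ε := by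
    refine le_of_eq_of_le ?_ (ENNReal.ofReal_le_ofReal hnε)
    rw [ENNReal.ofReal_pow (by norm_num), one_div, ENNReal.ofReal_inv_of_pos two_pos,
      ENNReal.ofReal_ofNat]
  calc ν {y | shiftDist x y < ε}
      ≤ ν ((Finset.Icc (-n : ℤ) n : Set ℤ).pi fun i => ball (x i) δ) := measure_mono fun _ hy =>
        setOf_shiftDist_lt_subset_pi_ball x hδ n (lt_of_lt_of_le hy hεn)
    _ ≤ c ^ (2 * n + 1) := hν n
    _ ≤ (2⁻¹ ^ (L : ℝ)) ^ (2 * n + 1) := by gcongr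
    _ = (2⁻¹ ^ (2 * n + 1)) ^ (L : ℝ) := by
        rw [← ENNReal.rpow_mul_natCast, mul_comm, ENNReal.rpow_natCast_mul]
    _ ≤ ENNReal.ofReal ε ^ (L : ℝ) := by gcongr

end ShiftDist

section SeparatedApproximation

lemma exists_embedding_forall_mem {M : Type*} [TopologicalSpace M] [T1Space M] [PerfectSpace M]
    (κ : Type*) [Countable κ] {q : M} {s : Set M} (hs : s ∈ 𝓝 q) : ∃ f : κ ↪ M, ∀ k, f k ∈ s := by
  obtain ⟨e⟩ := nonempty_embedding_nat κ
  let g := (infinite_of_mem_nhds q hs).natEmbedding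
  exact ⟨(e.trans g).trans (.subtype _), fun k => (g (e k)).2⟩

variable {α M κ : Type*} [MeasurableSpace α] [MetricSpace M]

lemma eventually_pairwise_two_mul_le_dist [Finite κ] (f : κ ↪ M) :
    ∀ᶠ δ in 𝓝[>] (0 : ℝ), Pairwise fun k k' => 2 * δ ≤ dist (f k) (f k') := by
  simp only [Pairwise, eventually_all]
  intro k k' hne
  filter_upwards [Ioo_mem_nhdsGT (half_pos (dist_pos.2 (f.injective.ne hne)))] with δ hδ
  linarith [hδ.2]

variable [PerfectSpace M] [MeasurableSpace M]

lemma exists_measurable_separated_dist_lt (κ : Type*) [Finite κ] [MeasurableSpace κ]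
    [MeasurableSingletonClass κ] (s : SimpleFunc α M) {r : ℝ} (hr : 0 < r) :
    ∃ φ : α × κ → M, Measurable φ ∧
      (∃ δ > 0, ∀ a, Pairwise fun k k' => 2 * δ ≤ dist (φ (a, k)) (φ (a, k'))) ∧
      ∀ z, dist (φ z) (s z.1) < r := by
  choose f hf using fun q : M => exists_embedding_forall_mem κ (ball_mem_nhds q hr)
  have hsep : ∀ᶠ δ in 𝓝[>] (0 : ℝ), ∀ q ∈ Set.range s,
      Pairwise fun k k' => 2 * δ ≤ dist (f q k) (f q k') :=
    (eventually_all_finite s.finite_range).2 fun q _ => eventually_pairwise_two_mul_le_dist (f q)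
  obtain ⟨δ, hδ, hδ0⟩ := (hsep.and self_mem_nhdsWithin).exists
  exact ⟨fun z => f (s z.1) z.2,
    measurable_from_prod_countable_left fun k => (s.map fun q => f q k).measurable,
    ⟨δ, hδ0, fun a => hδ _ (mem_range_self a)⟩, fun z => hf _ _⟩

lemma exists_seq_measurable_separated_tendsto_fst [SecondCountableTopology M] [BorelSpace M]
    [Nonempty M] (κ : Type*) [Finite κ] [MeasurableSpace κ] [MeasurableSingletonClass κ] :
    ∃ φ : ℕ → M × κ → M, (∀ n, Measurable (φ n)) ∧
      (∀ n, ∃ δ > 0, ∀ a, Pairwise fun k k' => 2 * δ ≤ dist (φ n (a, k)) (φ n (a, k'))) ∧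
      ∀ z, Tendsto (fun n => φ n z) atTop (𝓝 z.1) := by
  choose φ hφ hsep hdist using fun n : ℕ => exists_measurable_separated_dist_lt κ
    (SimpleFunc.nearestPt (TopologicalSpace.denseSeq M) n) (Nat.one_div_pos_of_nat (α := ℝ))
  refine ⟨φ, hφ, hsep, fun z => ?_⟩
  have hnearest := SimpleFunc.tendsto_nearestPt (TopologicalSpace.denseRange_denseSeq M z.1)
  refine (tendsto_iff_of_dist ?_).1 hnearest
  refine squeeze_zero (fun _ => dist_nonneg) (fun n => ?_) tendsto_one_div_add_atTop_nhds_zero_nat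
  rw [dist_comm]
  exact (hdist n z).le

end SeparatedApproximation

section Perturbation

variable {ι α β κ : Type*}

/-- The coordinatewise application `(x, ξ) ↦ (φ (xᵢ, ξᵢ))ᵢ` of `φ` to a pair of families;
it intertwines the shifts. -/
def coordMap (φ : α × κ → β) (z : (ι → α) × (ι → κ)) : ι → β := fun i => φ (z.1 i, z.2 i)

variable [MeasurableSpace α] [MeasurableSpace β] [MeasurableSpace κ] {φ : α × κ → β}

lemma measurable_coordMap (hφ : Measurable φ) : Measurable (coordMap (ι := ι) φ) :=
  measurable_pi_lambda _ fun _ => hφ.comp (by fun_prop)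

/-- The law of the family `(φ (xᵢ, ξᵢ))ᵢ`, where `x` has law `μ` and, independently of `x`, the
labels `ξᵢ` are independent with common law `p`; meaningful for a probability measure `p`. -/
noncomputable def iidPerturbation (φ : α × κ → β) (μ : Measure (ι → α)) (p : Measure κ) :
    Measure (ι → β) :=
  (μ.prod (Measure.infinitePi fun _ => p)).map (coordMap φ)

variable (p : Measure κ) [IsProbabilityMeasure p]

lemma isProbabilityMeasure_iidPerturbation (hφ : Measurable φ) (μ : Measure (ι → α))
    [IsProbabilityMeasure μ] : IsProbabilityMeasure (iidPerturbation φ μ p) :=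
  Measure.isProbabilityMeasure_map (measurable_coordMap hφ).aemeasurable

lemma ergodic_iidPerturbation (hφ : Measurable φ) {μ : Measure (ℤ → α)} [IsProbabilityMeasure μ]
    (hμ : Ergodic fullShift μ) : Ergodic fullShift (iidPerturbation φ μ p) :=
  (measurable_coordMap hφ).measurePreserving _ |>.ergodic_of_ergodic_semiconj
    (ergodic_prodMap_fullShift_infinitePi p hμ) measurable_fullShift fun _ => rfl

lemma iidPerturbation_pi_le (hφ : Measurable φ) (μ : Measure (ι → α)) [IsProbabilityMeasure μ]
    {S : Finset ι} {U : ι → Set β} (hU : ∀ i ∈ S, MeasurableSet (U i)) {c : ℝ≥0∞}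
    (hc : ∀ i ∈ S, ∀ a, p {k | φ (a, k) ∈ U i} ≤ c) :
    iidPerturbation φ μ p ((S : Set ι).pi U) ≤ c ^ S.card := by
  have hpi : MeasurableSet ((S : Set ι).pi U) := .pi S.countable_toSet hU
  have hfibre (x : ι → α) :
      (Measure.infinitePi fun _ => p) (Prod.mk x ⁻¹' (coordMap φ ⁻¹' (S : Set ι).pi U)) ≤
        c ^ S.card :=
    calc _ = ∏ i ∈ S, p {k | φ (x i, k) ∈ U i} :=
          Measure.infinitePi_pi _ fun i hi => (hφ.comp measurable_prodMk_left) (hU i hi)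
      _ ≤ c ^ S.card := Finset.prod_le_pow_card _ _ _ fun i hi => hc i hi (x i)
  rw [iidPerturbation, Measure.map_apply (measurable_coordMap hφ) hpi,
    Measure.prod_apply (measurable_coordMap hφ hpi)]
  exact (lintegral_mono hfibre).trans_eq (by simp)

lemma tendsto_iidPerturbation [Countable ι] [TopologicalSpace α] [SecondCountableTopology α]
    [BorelSpace α] {J : Type*} {l : Filter J} [l.IsCountablyGenerated] {φ : J → α × κ → α}
    (hφ : ∀ j, Measurable (φ j)) (hlim : ∀ z, Tendsto (fun j => φ j z) l (𝓝 z.1))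
    (μ : ProbabilityMeasure (ι → α)) :
    Tendsto (β := ProbabilityMeasure (ι → α))
      (fun j => ⟨iidPerturbation (φ j) μ.toMeasure p,
        isProbabilityMeasure_iidPerturbation p (hφ j) μ.toMeasure⟩)
      l (𝓝 μ) := by
  have hdistrib := tendstoInDistribution_of_ae_tendsto (l := l)
    (μ' := μ.toMeasure.prod (Measure.infinitePi fun _ : ι => p))
    (fun j => (measurable_coordMap (hφ j)).aemeasurable) measurable_fst.aemeasurable
    (.of_forall fun z => tendsto_pi_nhds.2 fun i => hlim (z.1 i, z.2 i))
  have htendsto := hdistrib.tendsto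
  simp only [measurePreserving_fst.map_eq] at htendsto
  exact htendsto

end Perturbation

section Uniform

lemma uniformOn_univ_le_of_subsingleton {κ : Type*} [Fintype κ] [MeasurableSpace κ]
    [MeasurableSingletonClass κ] {s : Set κ} (hs : s.Subsingleton) :
    uniformOn univ s ≤ (Fintype.card κ : ℝ≥0∞)⁻¹ := by
  rw [uniformOn_univ, ← one_div]
  gcongr
  rw [Measure.count_apply hs.measurableSet]
  exact_mod_cast encard_le_one_iff_subsingleton.2 hs

theorem le_lowerLocalDim_iidPerturbation_uniformOn {α M κ : Type*} [MeasurableSpace α]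
    [MetricSpace M] [MeasurableSpace M] [OpensMeasurableSpace M] [Fintype κ] [Nonempty κ]
    [MeasurableSpace κ] [MeasurableSingletonClass κ] {φ : α × κ → M} (hφ : Measurable φ) {δ : ℝ}
    (hδ : 0 < δ) (hsep : ∀ a, Pairwise fun k k' => 2 * δ ≤ dist (φ (a, k)) (φ (a, k')))
    (μ : Measure (ℤ → α)) [IsProbabilityMeasure μ] {L : ℝ≥0}
    (hL : (2 : ℝ≥0∞) ^ (L : ℝ) ≤ Fintype.card κ) (x : ℤ → M) :
    L ≤ lowerLocalDim shiftDist (iidPerturbation φ μ (uniformOn univ)) x := by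
  refine le_lowerLocalDim_shiftDist hδ (c := (Fintype.card κ : ℝ≥0∞)⁻¹) ?_ fun n => ?_
  · rwa [ENNReal.inv_rpow, ENNReal.inv_le_inv]
  have hcard : (Finset.Icc (-n : ℤ) n).card = 2 * n + 1 := by
    rw [Int.card_Icc]
    lia
  rw [← hcard]
  refine iidPerturbation_pi_le _ hφ μ (fun i _ => measurableSet_ball) fun i _ a => ?_
  refine uniformOn_univ_le_of_subsingleton fun k hk k' hk' => ?_
  by_contra hne
  linarith [hsep a hne, mem_ball.1 hk, mem_ball.1 hk',
    dist_triangle_right (φ (a, k)) (φ (a, k')) (x i)]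

end Uniform

theorem fullShift_largePackingDim_dense_general {M : Type*} [MetricSpace M]
    [TopologicalSpace.SeparableSpace M] [PerfectSpace M] [MeasurableSpace M] [BorelSpace M]
    (L : ℝ≥0) :
    Dense {μ : {ν : ProbabilityMeasure (ℤ → M) // Ergodic fullShift ν.toMeasure} |
      ∀ x, L ≤ lowerLocalDim shiftDist μ.1.toMeasure x} := by
  intro μ
  have : SecondCountableTopology M := UniformSpace.secondCountable_of_separable M
  have : Nonempty M := μ.1.nonempty.map fun x => x 0
  obtain ⟨K, hK⟩ := ENNReal.exists_nat_gt (by finiteness : (2 : ℝ≥0∞) ^ (L : ℝ) ≠ ⊤)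
  have : NeZero K := ⟨by rintro rfl; simp at hK⟩
  obtain ⟨φ, hφ, hsep, hlim⟩ := exists_seq_measurable_separated_tendsto_fst (M := M) (Fin K)
  let p : Measure (Fin K) := uniformOn univ
  let ν (n : ℕ) : {ν : ProbabilityMeasure (ℤ → M) // Ergodic fullShift ν.toMeasure} :=
    ⟨⟨iidPerturbation (φ n) μ.1.toMeasure p, isProbabilityMeasure_iidPerturbation p (hφ n) _⟩,
      ergodic_iidPerturbation p (hφ n) μ.2⟩
  have hν : Tendsto ν atTop (𝓝 μ) :=
    tendsto_subtype_rng.2 (tendsto_iidPerturbation p hφ hlim μ.1)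
  refine mem_closure_of_tendsto hν (.of_forall fun n x => ?_)
  obtain ⟨δ, hδ, hsepδ⟩ := hsep n
  exact le_lowerLocalDim_iidPerturbation_uniformOn (hφ n) hδ hsepδ _ (by simpa using hK.le) x

/-- For the full shift on `ℤ → M` over a perfect Polish metric space `M`,
for every `L > 0` the set of ergodic invariant measures with `d̄_μ(x) ≥ L` for `μ`-a.e. `x`
(i.e. `dim_P^-(μ) ≥ L`) is dense in `M_e`. -/
theorem fullShift_largePackingDim_dense {M : Type*} [MetricSpace M] [CompleteSpace M]
    [TopologicalSpace.SeparableSpace M] [PerfectSpace M]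
    [MeasurableSpace M] [BorelSpace M] (L : ℝ) (hL : 0 < L) :
    Dense {μ : {ν : ProbabilityMeasure (ℤ → M) // Ergodic fullShift ν.toMeasure} |
        ∀ᵐ x ∂μ.1.toMeasure, ENNReal.ofReal L ≤ upperLocalDim shiftDist μ.1.toMeasure x} :=
  (fullShift_largePackingDim_dense_general L.toNNReal).mono fun _ hμ =>
    ae_of_all _ fun x => (hμ x).trans lowerLocalDim_le_upperLocalDim
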